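/- arXiv:0902.4070 — 3 statements merged into one kernel-verified Lean document; each statement's English description precedes it below -/
import Mathlib

section
/- Let 0 < α < 1 and 0 < p ≤ 1/(α+2). Then for every nonnegative real sequence (a_n)_{n≥1}, ∑_{n=1}^∞ ( (∑_{i=1}^n i^{α−1})^{−1} · ∑_{k=n}^∞ k^{α−1}·a_k )^p ≥ (αp/(1−αp))^p · ∑_{n=1}^∞ a_n^p. -/
open scoped ENNReal

lemma aux_log_upper {y : ℝ} (hy : 0 < y) (hy1 : y ≤ 1) : -Real.log y ≤ (1 - y ^ 2) / (2 * y) := by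
  have h := Real.log_le_sub_one_of_pos (x := 1) one_pos
  have key : ∀ t ∈ Set.Ici (0:ℝ), t ≤ Real.sinh t := fun t ht => Real.self_le_sinh_iff.mpr ht
  have h2 := key (-Real.log y) (by
    have := Real.log_nonpos hy.le hy1
    simp only [Set.mem_Ici]; linarith)
  rw [Real.sinh_eq, neg_neg, Real.exp_neg, Real.exp_log hy] at h2
  calc _ ≤ _ := h2
    _ = _ := by field_simp

lemma aux_sqrt_log {y : ℝ} (hy : 0 < y) (hy1 : y ≤ 1) : y ^ (1/2:ℝ) * (-Real.log y) ≤ 1 - y := by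
  set s := y ^ (1/2:ℝ) with hs
  have hs0 : 0 < s := Real.rpow_pos_of_pos hy _
  have hsy : s ^ 2 = y := by
    rw [hs, ← Real.rpow_natCast, ← Real.rpow_mul hy.le]; norm_num
  have hs1 : s ≤ 1 := Real.rpow_le_one hy.le hy1 (by norm_num)
  have h := aux_log_upper hs0 hs1
  have hl : Real.log y = 2 * Real.log s := by rw [← hsy, Real.log_pow]; norm_num
  rw [hl]
  have : s * (-(2 * Real.log s)) = 2 * s * (-Real.log s) := by ring
  rw [this]
  calc 2 * s * (-Real.log s) ≤ 2 * s * ((1 - s ^ 2) / (2 * s)) := by gcongr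
    _ = 1 - y := by rw [← hsy]; field_simp

lemma aux_pow_log {y q : ℝ} (hy : 0 < y) (hy1 : y ≤ 1) (hq : 1/2 ≤ q) :
    y ^ q * (-Real.log y) ≤ 1 - y := by
  refine le_trans ?_ (aux_sqrt_log hy hy1)
  have := Real.log_nonpos hy.le hy1
  exact mul_le_mul_of_nonneg_right (Real.rpow_le_rpow_of_exponent_ge hy hy1 hq) (by linarith)

lemma base_poly {A m : ℝ} (hm : 0 < m) (hmA : m ≤ A) (h : 2 * A^3 + 3 * m^3 = 5)
    (hm3 : 2/5 ≤ m^3) : A^2 ≤ 2 * ((A^3 - m^3)/3) + m^2 := by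
  have hA : 0 < A := by linarith
  suffices h2 : 3 * (A + m) ≤ 2 * (A^2 + A*m + m^2) by
    nlinarith [mul_le_mul_of_nonneg_left h2 (sub_nonneg.mpr hmA)]
  by_contra hc
  push Not at hc
  obtain ⟨t, ht⟩ : ∃ t, m = t * A := ⟨m / A, by field_simp⟩
  have ht0 : 0 < t := by
    by_contra h'; push Not at h'; nlinarith
  have ht1 : t ≤ 1 := by
    by_contra h'; push Not at h'; nlinarith
  have hA3 : A^3 ≤ 19/10 := by linarith
  have ht3 : 4/19 ≤ t^3 := by
    rw [ht, mul_pow] at hm3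
    have : 0 < t^3 := by positivity
    nlinarith
  have htl : 59/100 ≤ t := by
    by_contra h'; push Not at h'
    have : t^3 ≤ (59/100)^3 := by gcongr
    norm_num at this; linarith
  have hc1 : 2 * A * (1 + t + t^2) < 3 * (1 + t) := by
    rw [ht] at hc
    have : A * (2 * A * (1 + t + t^2)) < A * (3 * (1+t)) := by nlinarith
    exact lt_of_mul_lt_mul_left this hA.le
  have hc2 : (2 * A * (1 + t + t^2))^3 < (3 * (1 + t))^3 := by
    gcongr
  have h5 : A^3 * (2 + 3 * t^3) = 5 := by rw [ht] at h; linarith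
  have h6 : 40 * (1+t+t^2)^3 < 27 * (1+t)^3 * (2 + 3*t^3) := by
    have : (2 * A * (1 + t + t^2))^3 * (2 + 3*t^3) < (3 * (1 + t))^3 * (2+3*t^3) := by
      gcongr
    have e : (2 * A * (1 + t + t^2))^3 * (2 + 3*t^3) = 8 * (A^3 * (2+3*t^3)) * (1+t+t^2)^3 := by ring
    rw [e, h5] at this
    linarith
  have h7 : 27 * (1+t)^3 * (2 + 3*t^3) ≤ 40 * (1+t+t^2)^3 := by
    have key : 40 * (1+t+t^2)^3 - 27 * (1+t)^3 * (2 + 3*t^3)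
        = (1 - t) * (-14 - 56*t + 22*t^2 + 167*t^3 + 164*t^4 + 41*t^5) := by ring
    have hQ : 0 ≤ -14 - 56*t + 22*t^2 + 167*t^3 + 164*t^4 + 41*t^5 := by
      have h2 : (59/100)^2 ≤ t^2 := by gcongr
      have h4 : (59/100)^3 * t ≤ t^3 * t := by gcongr;
      have h3 : (59/100)^2 * t ≤ t^2 * t := by gcongr
      have h5 : (59/100)^4 * t ≤ t^4 * t := by gcongr
      nlinarith
    have := mul_nonneg (sub_nonneg.mpr ht1) hQ
    linarith
  linarith

lemma base_ineq {x : ℝ} (hx : 0 < x) (hx2 : x ≤ 1/2) :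
    (1 + 9/5*x)^(2/3:ℝ) ≤ 2*x + (1 - 6/5*x)^(2/3:ℝ) := by
  have h1 : 0 < 1 - 6/5*x := by linarith
  have h2 : 0 < 1 + 9/5*x := by linarith
  have cube : ∀ y : ℝ, 0 < y → (y^(1/3:ℝ))^3 = y := fun y hy => by
    rw [← Real.rpow_natCast, ← Real.rpow_mul hy.le]; norm_num
  have sq : ∀ y : ℝ, 0 < y → (y^(1/3:ℝ))^2 = y^(2/3:ℝ) := fun y hy => by
    rw [← Real.rpow_natCast, ← Real.rpow_mul hy.le]; norm_num
  have := base_poly (A := (1 + 9/5*x)^(1/3:ℝ)) (m := (1 - 6/5*x)^(1/3:ℝ))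
    (Real.rpow_pos_of_pos h1 _) (Real.rpow_le_rpow h1.le (by linarith) (by norm_num))
    (by rw [cube _ h1, cube _ h2]; ring) (by rw [cube _ h1]; linarith)
  rw [cube _ h1, cube _ h2, sq _ h1, sq _ h2] at this
  linarith

lemma s3 {x r : ℝ} (hx : 0 < x) (hx2 : x ≤ 1/2) (hr : 2 ≤ r) :
    (1 + (r - 1/5)*x)^(1 - 1/(r+1)) ≤ r*x + (1 - 6/5*x)^(1 - 1/(r+1)) := by
  set m := 1 - 6/5*x with hm
  have hm0 : 0 < m := by linarith
  have hm1 : m ≤ 1 := by linarith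
  have hder : ∀ t : ℝ, 2 ≤ t → HasDerivAt
      (fun r : ℝ => r*x + m^(1 - 1/(r+1)) - (1 + (r - 1/5)*x)^(1 - 1/(r+1)))
      (x + m^(1 - 1/(t+1)) * Real.log m * (1/(t+1))^2 -
        (x * (1 - 1/(t+1)) * (1 + (t - 1/5)*x)^(-(1/(t+1))) +
         (1/(t+1))^2 * (1 + (t - 1/5)*x)^(1 - 1/(t+1)) * Real.log (1 + (t - 1/5)*x))) t := by
    intro t ht
    have ht1 : t + 1 ≠ 0 := by linarith
    have hY : 0 < 1 + (t - 1/5)*x := by nlinarith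
    have he : HasDerivAt (fun r : ℝ => 1 - 1/(r+1)) ((1/(t+1))^2) t := by
      have := (((hasDerivAt_id t).add_const (1:ℝ)).inv ht1).const_sub 1
      have e1 : (1/(t+1))^2 = -(-1 / (id t + 1)^2) := by
        simp only [id]; field_simp
      rw [e1]
      refine this.congr_of_eventuallyEq (Filter.Eventually.of_forall fun y => ?_)
      simp
    have hYd : HasDerivAt (fun r : ℝ => 1 + (r - 1/5)*x) x t := by
      have := (((hasDerivAt_id t).sub_const (1/5:ℝ)).mul_const x).const_add 1
      simpa using this
    have h1 := (hasDerivAt_id t).mul_const x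
    have h2 := he.const_rpow hm0
    have h3 := hYd.rpow he hY
    have h4 := (h1.add h2).sub h3
    have e : 1 - 1/(t+1) - 1 = -(1/(t+1)) := by ring
    rw [e] at h4
    have e2 : (x + m^(1 - 1/(t+1)) * Real.log m * (1/(t+1))^2 -
        (x * (1 - 1/(t+1)) * (1 + (t - 1/5)*x)^(-(1/(t+1))) +
         (1/(t+1))^2 * (1 + (t - 1/5)*x)^(1 - 1/(t+1)) * Real.log (1 + (t - 1/5)*x))) =
        1 * x + Real.log m * (1 / (t + 1)) ^ 2 * m ^ (1 - 1 / (t + 1)) -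
        (x * (1 - 1/(t+1)) * (1 + (t - 1/5)*x)^(-(1/(t+1))) +
         (1/(t+1))^2 * (1 + (t - 1/5)*x)^(1 - 1/(t+1)) * Real.log (1 + (t - 1/5)*x)) := by ring
    rw [e2]
    exact h4
  have hmono : MonotoneOn
      (fun r : ℝ => r*x + m^(1 - 1/(r+1)) - (1 + (r - 1/5)*x)^(1 - 1/(r+1))) (Set.Ici 2) := by
    apply monotoneOn_of_deriv_nonneg (convex_Ici 2)
    · intro t ht
      exact (hder t ht).continuousAt.continuousWithinAt
    · intro t ht
      rw [interior_Ici] at ht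
      exact (hder t (le_of_lt ht)).differentiableAt.differentiableWithinAt
    · intro t ht
      rw [interior_Ici] at ht
      have ht : 2 < t := ht
      rw [(hder t ht.le).deriv]
      set p := 1/(t+1) with hp
      have hp0 : 0 < p := by positivity
      have hpt : p * (t+1) = 1 := by rw [hp]; field_simp
      have hp3 : p ≤ 1/3 := by nlinarith
      set Y := 1 + (t - 1/5)*x with hYdef
      have hY : 1 < Y := by nlinarith
      have hlog1 := aux_pow_log hm0 hm1 (q := 1 - p) (by linarith)
      have hlogY : p * Real.log Y ≤ Y^p - 1 := by
        rw [← Real.log_rpow (by linarith)]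
        exact Real.log_le_sub_one_of_pos (Real.rpow_pos_of_pos (by linarith) _)
      set Z := Y^(-p) with hZ
      have hZ0 : 0 < Z := Real.rpow_pos_of_pos (by linarith) _
      have hYq : Y^(1-p) = Y * Z := by
        rw [hZ, sub_eq_add_neg, Real.rpow_add (by linarith), Real.rpow_one]
      have hZp : Z * Y^p = 1 := by
        rw [hZ, ← Real.rpow_add (by linarith)]; simp
      have hB : Y^p ≤ 1 + p * ((t-1/5)*x) :=
        rpow_one_add_le_one_add_mul_self (by nlinarith) hp0.le (by linarith)
      have hc : p * (t - 1/5) = (1 - p) - p/5 := by linarith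
      -- key
      have hk : 1 - (1-p)*(6/5)*x ≤ Z * (1 - x/5) := by
        have h1 : (1 + ((1-p) - p/5)*x) * (1 - (1-p)*(6/5)*x) ≤ 1 - x/5 := by
          nlinarith [mul_nonneg (mul_nonneg (show (0:ℝ) ≤ 1 - p - p/5 by linarith) (show (0:ℝ) ≤ 1 - p by linarith)) (sq_nonneg x)]
        have h2 : 0 ≤ 1 - (1-p)*(6/5)*x := by nlinarith
        have h3 : Y^p * (1 - (1-p)*(6/5)*x) ≤ 1 - x/5 := by
          refine le_trans (mul_le_mul_of_nonneg_right hB h2) ?_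
          rw [← mul_assoc, hc]; exact h1
        calc 1 - (1-p)*(6/5)*x = Z * (Y^p * (1 - (1-p)*(6/5)*x)) := by
              rw [← mul_assoc, hZp, one_mul]
          _ ≤ _ := by gcongr
      have hA : p^2 * Y^(1-p) * Real.log Y ≤ p * (Y - Y * Z) := by
        rw [hYq]
        have : p * (Y * Z) * (p * Real.log Y) ≤ p * (Y * Z) * (Y^p - 1) := by gcongr
        have e : p * (Y * Z) * (Y^p - 1) = p * (Y * (Z * Y^p) - Y * Z) := by ring
        rw [e, hZp] at this
        linarith
      have hM : -(p^2 * (6/5*x)) ≤ m^(1-p) * Real.log m * p^2 := by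
        have := mul_le_mul_of_nonneg_left hlog1 (sq_nonneg p)
        have e : 1 - m = 6/5*x := by rw [hm]; ring
        rw [e] at this
        linarith
      have hYp : p * Y = p + (1-p)*x - p*x/5 := by
        rw [hYdef]
        have : p * (1 + (t - 1/5)*x) = p + (p * (t-1/5))*x := by ring
        rw [this, hc]; ring
      have hfin : p * (Y - Y*Z) = p*Y - (p*Y)*Z := by ring
      rw [hfin, hYp] at hA
      have hk2 := mul_le_mul_of_nonneg_left hk hp0.le
      nlinarith
  have h := hmono (Set.mem_Ici.mpr le_rfl) (Set.mem_Ici.mpr hr) hr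
  have hb := base_ineq hx hx2
  simp only at h
  norm_num at h hb ⊢
  rw [← hm] at hb
  linarith

lemma s2 {x p : ℝ} (hx : 0 < x) (hx2 : x ≤ 1/2) (hp : 1/3 ≤ p) (hp2 : p ≤ 1/2) :
    (1 + 9/5*x)^(1-p) ≤ 2*x + (1-x)^(3*p-1) * (1 - 6/5*x)^(1-p) := by
  have hm0 : 0 < 1 - 6/5*x := by linarith
  have hy0 : 0 < 1 - x := by linarith
  have hY0 : 0 < 1 + 9/5*x := by linarith
  obtain ⟨d, hd⟩ : ∃ d, d = p - 1/3 := ⟨_, rfl⟩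
  have hd0 : 0 ≤ d := by linarith
  set M := (1 - 6/5*x)^(2/3:ℝ) with hM
  set P := (1 + 9/5*x)^(1-p) with hP
  have hMpos : 0 < M := Real.rpow_pos_of_pos hm0 _
  have hPpos : 0 < P := Real.rpow_pos_of_pos hY0 _
  set K1 := 3 * Real.log (1-x) - Real.log (1 - 6/5*x) with hK1
  set K2 := Real.log (1 + 9/5*x) with hK2
  have eM : (1-x)^(3*p-1) * (1 - 6/5*x)^(1-p) = M * Real.exp (d*K1) := by
    rw [hM, Real.rpow_def_of_pos hm0, Real.rpow_def_of_pos hm0, Real.rpow_def_of_pos hy0,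
      ← Real.exp_add, ← Real.exp_add, hK1, hd]
    congr 1; ring
  have eP : (1 + 9/5*x)^(2/3:ℝ) = P * Real.exp (d*K2) := by
    rw [hP, Real.rpow_def_of_pos hY0, Real.rpow_def_of_pos hY0, ← Real.exp_add, hK2, hd]
    congr 1; ring
  have hb := base_ineq hx hx2
  rw [eP] at hb
  rw [eM]
  have h1 := mul_le_mul_of_nonneg_left (Real.add_one_le_exp (d*K1)) hMpos.le
  have h2 := mul_le_mul_of_nonneg_left (Real.add_one_le_exp (d*K2)) hPpos.le
  suffices hs : 0 ≤ P * K2 + M * K1 by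
    have := mul_nonneg hd0 hs
    nlinarith
  -- bounds
  have hMle : M ≤ 1 - 4/5*x := by
    have := rpow_one_add_le_one_add_mul_self (s := -(6/5*x)) (p := 2/3) (by linarith) (by norm_num) (by norm_num)
    rw [← sub_eq_add_neg] at this
    linarith
  have hL := aux_log_upper hy0 (by linarith)
  have hq : Real.log (1 - 6/5*x) - Real.log (1-x) ≤ -(x/5)/(1-x) := by
    rw [← Real.log_div hm0.ne' hy0.ne']
    refine le_trans (Real.log_le_sub_one_of_pos (by positivity)) (le_of_eq ?_)
    field_simp; ring
  have hK1le : -K1 ≤ x*(9/5-x)/(1-x) := by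
    have : -K1 ≤ 2*((1 - (1-x)^2)/(2*(1-x))) + -(x/5)/(1-x) := by rw [hK1]; linarith
    refine le_trans this (le_of_eq ?_)
    field_simp; ring
  have hPge : 1 + 9/10*x - 81/200*x^2 ≤ P := by
    have h1 : (1 + 9/5*x)^(1/2:ℝ) ≤ P := Real.rpow_le_rpow_of_exponent_le (by linarith) (by linarith)
    refine le_trans ?_ h1
    rw [← Real.sqrt_eq_rpow]
    apply Real.le_sqrt_of_sq_le
    nlinarith [pow_pos hx 3, pow_pos hx 4, mul_pos hx hx]
  have hK2ge : 2*(9/5*x)/(2+9/5*x) ≤ K2 := by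
    have := Real.le_log_one_add_of_nonneg (x := 9/5*x) (by linarith)
    rw [hK2]; refine le_trans (le_of_eq ?_) this; ring
  have hU : M * (-K1) ≤ (1-4/5*x) * (x*(9/5-x)/(1-x)) := by
    have : 0 ≤ x*(9/5-x)/(1-x) := by
      apply div_nonneg _ hy0.le; nlinarith
    exact le_trans (mul_le_mul_of_nonneg_left hK1le hMpos.le) (mul_le_mul_of_nonneg_right hMle this)
  have hV : (1 + 9/10*x - 81/200*x^2) * (2*(9/5*x)/(2+9/5*x)) ≤ P * K2 := by
    have : 0 ≤ 2*(9/5*x)/(2+9/5*x) := by positivity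
    exact mul_le_mul hPge hK2ge this hPpos.le
  have hfin : (1-4/5*x) * (x*(9/5-x)/(1-x)) ≤ (1 + 9/10*x - 81/200*x^2) * (2*(9/5*x)/(2+9/5*x)) := by
    rw [← mul_div_assoc, ← mul_div_assoc, div_le_div_iff₀ hy0 (by linarith)]
    have : (1-4/5*x) * (9/5-x) * (2+9/5*x) ≤ (1 + 9/10*x - 81/200*x^2) * (2*(9/5)) * (1-x) := by
      nlinarith [pow_pos hx 3, mul_nonneg hx.le (sub_nonneg.mpr hx2)]
    have := mul_le_mul_of_nonneg_left this hx.le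
    linarith
  linarith

lemma s1 {x r r0 p : ℝ} (hx : 0 < x) (hx2 : x ≤ 1/2) (hp : 0 < p) (hp2 : p ≤ 1/2)
    (hr0 : 0 < r0 - 1/5) (hrr : r0 ≤ r) (hu : 1 ≤ (1+r0)*p)
    (h : (1 + (r0-1/5)*x)^(1-p) ≤ r0*x + (1-x)^((1+r0)*p-1) * (1 - 6/5*x)^(1-p)) :
    (1 + (r-1/5)*x)^(1-p) ≤ r*x + (1-x)^((1+r)*p-1) * (1 - 6/5*x)^(1-p) := by
  have hm0 : 0 < 1 - 6/5*x := by linarith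
  have hy0 : 0 < 1 - x := by linarith
  obtain ⟨d, hd⟩ : ∃ d, d = r - r0 := ⟨_, rfl⟩
  have hd0 : 0 ≤ d := by linarith
  set M := (1-x)^((1+r0)*p-1) * (1 - 6/5*x)^(1-p) with hM
  have hMpos : 0 < M := mul_pos (Real.rpow_pos_of_pos hy0 _) (Real.rpow_pos_of_pos hm0 _)
  set Y := 1 + (r0-1/5)*x with hY
  have hY1 : 1 ≤ Y := by nlinarith [mul_pos hr0 hx]
  have eM : (1-x)^((1+r)*p-1) * (1 - 6/5*x)^(1-p) = M * Real.exp (d*p*Real.log (1-x)) := by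
    have : (1+r)*p-1 = ((1+r0)*p-1) + d*p := by rw [hd]; ring
    rw [this, Real.rpow_add hy0, hM, Real.rpow_def_of_pos hy0 (d*p)]
    rw [mul_comm (Real.log (1-x)) (d*p)]; ring
  have h1 := mul_le_mul_of_nonneg_left (Real.add_one_le_exp (d*p*Real.log (1-x))) hMpos.le
  have hMle : M ≤ (1-x)^(1-p) := by
    have a1 : (1-x)^((1+r0)*p-1) ≤ 1 := Real.rpow_le_one hy0.le (by linarith) (by linarith)
    have a2 : (1 - 6/5*x)^(1-p) ≤ (1-x)^(1-p) := Real.rpow_le_rpow hm0.le (by linarith) (by linarith)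
    calc M ≤ 1 * (1-x)^(1-p) := mul_le_mul a1 a2 (Real.rpow_nonneg hm0.le _) zero_le_one
      _ = _ := one_mul _
  have hl0 : 0 ≤ -Real.log (1-x) := by
    have := Real.log_nonpos hy0.le (by linarith); linarith
  have hML : M * (-Real.log (1-x)) ≤ x := by
    have := aux_pow_log hy0 (by linarith) (q := 1-p) (by linarith)
    have := mul_le_mul_of_nonneg_right hMle hl0
    linarith
  have hYd : (1 + (r-1/5)*x)^(1-p) ≤ Y^(1-p) + (1-p)*(d*x) := by
    have e : 1 + (r-1/5)*x = Y * (1 + d*x/Y) := by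
      have : Y * (1 + d*x/Y) = Y + d*x := by field_simp
      rw [this, hd, hY]; ring
    have hdx : 0 ≤ d*x/Y := by positivity
    rw [e, Real.mul_rpow (by linarith) (by linarith)]
    have hB := rpow_one_add_le_one_add_mul_self (s := d*x/Y) (p := 1-p) (by linarith) (by linarith) (by linarith)
    have hYq : Y^(1-p) ≤ Y := by
      conv_rhs => rw [← Real.rpow_one Y]
      exact Real.rpow_le_rpow_of_exponent_le hY1 (by linarith)
    have hYq0 : 0 ≤ Y^(1-p) := Real.rpow_nonneg (by linarith) _
    calc Y^(1-p) * (1 + d*x/Y)^(1-p) ≤ Y^(1-p) * (1 + (1-p)*(d*x/Y)) := by gcongr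
      _ = Y^(1-p) + Y^(1-p) * ((1-p)*(d*x/Y)) := by ring
      _ ≤ Y^(1-p) + Y * ((1-p)*(d*x/Y)) := by
          have : 0 ≤ (1-p)*(d*x/Y) := mul_nonneg (by linarith) hdx
          gcongr
      _ = _ := by field_simp
  rw [eM]
  have := mul_le_mul_of_nonneg_left hML (mul_nonneg hd0 hp.le)
  have er : r*x = r0*x + d*x := by rw [hd]; ring
  rw [er]
  nlinarith

lemma key {x r p : ℝ} (hx : 0 < x) (hx2 : x ≤ 1/2) (hp : 0 < p) (hr : 2 ≤ r)
    (hrp : r*p ≤ 1) (hu : 1 ≤ (1+r)*p) :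
    (1 + (r-1/5)*x)^(1-p) ≤ r*x + (1-x)^((1+r)*p-1) * (1 - 6/5*x)^(1-p) := by
  have hp2 : p ≤ 1/2 := by nlinarith
  rcases le_total p (1/3) with h3 | h3
  · have e : (1 + (1/p-1))*p = 1 := by field_simp; ring
    have h1p : 3 ≤ 1/p := by rw [le_div_iff₀ hp]; linarith
    have h1r : 1/p - 1 ≤ r := by
      have : 1/p ≤ 1 + r := by rw [div_le_iff₀ hp]; exact hu
      linarith
    apply s1 (r0 := 1/p-1) hx hx2 hp hp2 (by linarith) h1r e.ge
    have := s3 (r := 1/p-1) hx hx2 (by linarith)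
    have e2 : 1/(1/p - 1 + 1) = p := by simp
    rw [e2] at this
    rw [e, sub_self, Real.rpow_zero, one_mul]
    exact this
  · apply s1 (r0 := 2) hx hx2 hp hp2 (by norm_num) hr (by linarith)
    have := s2 hx hx2 h3 hp2
    norm_num at this ⊢
    exact this

lemma lam_bound {α : ℝ} (h0 : 0 < α) (h1 : α < 1) (n : ℕ) :
    α * ∑ i ∈ Finset.Icc 1 (n + 1), (i : ℝ) ^ (α - 1) ≤ ((n:ℝ) + 1) ^ α := by
  induction n with
  | zero => simp; exact h1.le
  | succ k ih =>
    rw [Finset.sum_Icc_succ_top (by omega), mul_add]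
    push_cast
    set N : ℝ := (k:ℝ) + 1 + 1 with hN
    have hN0 : 1 < N := by rw [hN]; have : (0:ℝ) ≤ k := Nat.cast_nonneg k; linarith
    have hB := rpow_one_add_le_one_add_mul_self (s := -(1/N)) (p := α)
      (by have : 1/N ≤ 1 := by rw [div_le_one (by linarith)]; exact hN0.le
          linarith) h0.le h1.le
    have e1 : (k:ℝ) + 1 = N * (1 + -(1/N)) := by
      have : N * (1 + -(1/N)) = N - 1 := by field_simp; ring
      rw [this, hN]; ring
    have e2 : N^(α-1) = N^α / N := by rw [Real.rpow_sub_one (by linarith)]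
    have hnn : 0 ≤ 1 + -(1/N) := by
      have : 1/N ≤ 1 := by rw [div_le_one (by linarith)]; exact hN0.le
      linarith
    have : ((k:ℝ)+1)^α ≤ N^α * (1 + α * -(1/N)) := by
      rw [e1, Real.mul_rpow (by linarith) hnn]
      exact mul_le_mul_of_nonneg_left hB (Real.rpow_nonneg (by linarith) _)
    rw [e2]
    have e3 : N^α * (1 + α * -(1/N)) = N^α - α * (N^α/N) := by ring
    linarith

lemma conc {p d y w : ℝ} (hp : 0 < p) (hp1 : p ≤ 1) (hd : 0 ≤ d) (hy : 0 ≤ y) (hw : 1 < w) :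
    d^p + (w-1)^(1-p) * y^p ≤ w^(1-p) * (d+y)^p := by
  have hw0 : 0 < w := by linarith
  have hw1 : 0 < w - 1 := by linarith
  have q1 : (0:ℝ) ≤ d*w := by positivity
  have q2 : (0:ℝ) ≤ y*w/(w-1) := by positivity
  have q3 : (0:ℝ) ≤ 1/w := by positivity
  have q4 : (0:ℝ) ≤ (w-1)/w := by positivity
  have q5 : 1/w + (w-1)/w = 1 := by field_simp; ring
  obtain ⟨-, hcc⟩ := Real.concaveOn_rpow hp.le hp1
  have h := hcc (Set.mem_Ici.mpr q1) (Set.mem_Ici.mpr q2) q3 q4 q5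
  simp only [smul_eq_mul] at h
  have e1 : 1/w*(d*w) + (w-1)/w*(y*w/(w-1)) = d + y := by field_simp
  rw [e1, Real.mul_rpow hd hw0.le, Real.div_rpow (by positivity) hw1.le, Real.mul_rpow hy hw0.le] at h
  have h2 := mul_le_mul_of_nonneg_left h (Real.rpow_nonneg hw0.le (1-p))
  have ew : w^(1-p) = w / w^p := by rw [Real.rpow_sub hw0, Real.rpow_one]
  have ew1 : (w-1)^(1-p) = (w-1) / (w-1)^p := by rw [Real.rpow_sub hw1, Real.rpow_one]
  refine le_trans (le_of_eq ?_) h2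
  rw [ew, ew1]
  have := Real.rpow_pos_of_pos hw0 p
  have := Real.rpow_pos_of_pos hw1 p
  field_simp

lemma first {r α p : ℝ} (hr : 2 ≤ r) (h0 : 0 < α) (h1 : α < 1) (hp : p * (r + α) = 1) :
    ((1 + (4/5) + (r - 1))/r)^(1-p) ≤ (r/α)^p := by
  have hp0 : 0 < p := by
    by_contra h; push Not at h; nlinarith
  have hr0 : 0 < r := by linarith
  have e : 1 - p = (r + α - 1) * p := by linarith
  have hw : 1 ≤ (1 + (4/5) + (r - 1))/r := by rw [le_div_iff₀ hr0]; linarith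
  rw [e, Real.rpow_mul (by linarith)]
  apply Real.rpow_le_rpow (Real.rpow_nonneg (by linarith) _) _ hp0.le
  have hra : r ≤ r/α := by rw [le_div_iff₀ h0]; nlinarith
  refine le_trans (Real.rpow_le_rpow_of_exponent_le hw (show r + α - 1 ≤ r by linarith)) (le_trans ?_ hra)
  have e2 : (1 + (4/5) + (r - 1))/r = 1 + 4/5/r := by field_simp; ring
  rw [e2]
  rcases le_total r 3 with h3 | h3
  · have : 1 + 4/5/r ≤ 7/5 := by
      have : 4/5/r ≤ 2/5 := by rw [div_le_iff₀ hr0]; linarith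
      linarith
    refine le_trans (Real.rpow_le_rpow (by positivity) this hr0.le) ?_
    have e3 : r = 2 + (r-2) := by ring
    have hB := rpow_one_add_le_one_add_mul_self (s := 2/5) (p := r-2) (by norm_num) (by linarith) (by linarith)
    have e4 : (7/5:ℝ)^r = (7/5)^2 * (1+2/5)^(r-2) := by
      conv_lhs => rw [e3, Real.rpow_add (by norm_num)]
      norm_num
    rw [e4]
    nlinarith
  · have : 1 + 4/5/r ≤ Real.exp (4/5/r) := by
      have := Real.add_one_le_exp (4/5/r); linarith
    refine le_trans (Real.rpow_le_rpow (by positivity) this hr0.le) ?_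
    rw [← Real.exp_mul]
    have e5 : 4/5/r*r = 4/5 := by field_simp
    rw [e5]
    have : Real.exp (4/5) ≤ Real.exp 1 := Real.exp_le_exp.mpr (by norm_num)
    have := Real.exp_one_lt_d9
    linarith

/-- coefficient condition for `n = m+1`. -/
lemma coef {r α p : ℝ} (hr : 2 ≤ r) (h0 : 0 < α) (h1 : α < 1) (hp : p * (r + α) = 1) (m : ℕ) :
    ((m:ℝ)+1)^((1-α)*p) * ((((m:ℝ)+1) - 1/5 + r)/r)^(1-p) ≤
      (r / (α * ∑ i ∈ Finset.Icc 1 (m + 1), (i : ℝ) ^ (α - 1)))^p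
       + (m:ℝ)^((1-α)*p) * (((m:ℝ) - 1/5)/r)^(1-p) := by
  have hp0 : 0 < p := by
    by_contra h; push Not at h; nlinarith
  have hr0 : 0 < r := by linarith
  have hu : 0 < (1-α)*p := mul_pos (by linarith) hp0
  rcases Nat.eq_zero_or_pos m with rfl | hm
  · have := first hr h0 h1 hp
    simp only [Nat.cast_zero, zero_add, Finset.Icc_self, Finset.sum_singleton, Nat.cast_one,
      Real.one_rpow, mul_one, one_mul, Real.zero_rpow hu.ne', zero_mul, add_zero]
    convert this using 3
    ring
  · have hm1 : (1:ℝ) ≤ m := by exact_mod_cast hm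
    set n : ℝ := (m:ℝ) + 1 with hn
    have hn0 : 0 < n := by linarith
    have hL := lam_bound h0 h1 m
    have hLpos : 0 < α * ∑ i ∈ Finset.Icc 1 (m + 1), (i : ℝ) ^ (α - 1) := by
      apply mul_pos h0
      apply Finset.sum_pos
      · intro i hi
        have := (Finset.mem_Icc.mp hi).1
        exact Real.rpow_pos_of_pos (by exact_mod_cast this) _
      · exact ⟨1, by simp⟩
    have hk := key (x := 1/n) (r := r) (p := p) (by positivity)
      (by rw [div_le_div_iff₀ hn0 (by norm_num)]; linarith) hp0 hr (by nlinarith) (by nlinarith)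
    have hA : (r / n^α)^p ≤ (r / (α * ∑ i ∈ Finset.Icc 1 (m + 1), (i : ℝ) ^ (α - 1)))^p := by
      apply Real.rpow_le_rpow (by positivity) _ hp0.le
      exact div_le_div_of_nonneg_left hr0.le hLpos hL
    refine le_trans ?_ (add_le_add_left hA _)
    have eu : (1+r)*p - 1 = (1-α)*p := by linarith
    rw [eu] at hk
    have e1 : 1 + (r-1/5)*(1/n) = (n - 1/5 + r)/n := by field_simp; ring
    have e2 : 1 - 1/n = m/n := by rw [hn]; field_simp; ring
    have e3 : 1 - 6/5*(1/n) = ((m:ℝ) - 1/5)/n := by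
      have : (m:ℝ) = n - 1 := by rw [hn]; ring
      rw [this]; field_simp; ring
    rw [e1, e2, e3] at hk
    have b1 : 0 ≤ n - 1/5 + r := by linarith
    have b2 : 0 ≤ (m:ℝ) - 1/5 := by linarith
    rw [Real.div_rpow b1 hn0.le, Real.div_rpow (by linarith) hn0.le, Real.div_rpow b2 hn0.le] at hk
    rw [Real.div_rpow b1 hr0.le, Real.div_rpow b2 hr0.le, Real.div_rpow hr0.le (by positivity),
      ← Real.rpow_mul hn0.le]
    have en : n^((1-α)*p) * n^(1-p) = n / n^(α*p) := by
      rw [← Real.rpow_add hn0, eq_div_iff (Real.rpow_pos_of_pos hn0 _).ne', ← Real.rpow_add hn0]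
      conv_rhs => rw [← Real.rpow_one n]
      congr 1; ring
    have er : r^p * r^(1-p) = r := by
      rw [← Real.rpow_add hr0]; simp
    have c1 := Real.rpow_pos_of_pos hn0 ((1-α)*p)
    have c2 := Real.rpow_pos_of_pos hn0 (1-p)
    have c3 := Real.rpow_pos_of_pos hr0 (1-p)
    have c4 := Real.rpow_pos_of_pos hn0 (α*p)
    set X := n^((1-α)*p)
    set W := n^(1-p)
    set R := r^(1-p)
    set V := n^(α*p)
    have hk2 := mul_le_mul_of_nonneg_left hk (show 0 ≤ X*W/R by positivity)
    have er2 : r^p = r / R := by field_simp; exact er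
    rw [er2]
    have z : X*W/R*(r*(1/n)) = r/R/V := by
      rw [en]; field_simp
    calc _ = X*W/R*((n - 1/5 + r)^(1-p)/W) := by field_simp
      _ ≤ _ := hk2
      _ = X*W/R*(r*(1/n)) + (m:ℝ)^((1-α)*p) * (((m:ℝ)-1/5)^(1-p)/R) := by
          rw [mul_add]; congr 1; field_simp
      _ = _ := by rw [z]

lemma step {r α p : ℝ} (hr : 2 ≤ r) (h0 : 0 < α) (h1 : α < 1) (hp : p * (r + α) = 1) (m : ℕ)
    {a A B : ℝ} (ha : 0 ≤ a) (hB : 0 ≤ B) (hA : A = ((m:ℝ)+1)^(α-1) * a + B) :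
    (α/r)^p * a^p + (α/r)^p * (((m:ℝ)+1)^((1-α)*p) * ((((m:ℝ)+1) - 1/5)/r)^(1-p)) * B^p ≤
     ((∑ i ∈ Finset.Icc 1 (m + 1), (i : ℝ) ^ (α - 1))⁻¹ * A)^p +
      (α/r)^p * ((m:ℝ)^((1-α)*p) * (((m:ℝ) - 1/5)/r)^(1-p)) * A^p := by
  have hp0 : 0 < p := by
    by_contra h; push Not at h; nlinarith
  have hp1 : p ≤ 1 := by nlinarith
  have hr0 : 0 < r := by linarith
  have hm0 : (0:ℝ) ≤ m := Nat.cast_nonneg m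
  set n : ℝ := (m:ℝ) + 1 with hn
  have hn0 : 0 < n := by linarith
  set S := ∑ i ∈ Finset.Icc 1 (m + 1), (i : ℝ) ^ (α - 1) with hS
  have hSpos : 0 < S := by
    apply Finset.sum_pos
    · intro i hi
      have := (Finset.mem_Icc.mp hi).1
      exact Real.rpow_pos_of_pos (by exact_mod_cast this) _
    · exact ⟨1, by simp⟩
  have hd0 : 0 ≤ n^(α-1) * a := by positivity
  have hA0 : 0 ≤ A := by rw [hA]; positivity
  have hc := conc (w := (n - 1/5 + r)/r) hp0 hp1 hd0 hB (by rw [lt_div_iff₀ hr0]; linarith)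
  have ew : (n - 1/5 + r)/r - 1 = (n - 1/5)/r := by field_simp; ring
  rw [ew, ← hA, Real.mul_rpow (by positivity) ha, ← Real.rpow_mul hn0.le] at hc
  have en : n^((1-α)*p) * n^((α-1)*p) = 1 := by
    rw [← Real.rpow_add hn0]; ring_nf; simp
  have hc2 := mul_le_mul_of_nonneg_left hc (Real.rpow_nonneg hn0.le ((1-α)*p))
  have hc3 : a^p + n^((1-α)*p) * ((n-1/5)/r)^(1-p) * B^p ≤
      n^((1-α)*p) * ((n - 1/5 + r)/r)^(1-p) * A^p := by
    have e : n^((1-α)*p) * (n^((α-1)*p) * a^p + ((n-1/5)/r)^(1-p) * B^p) =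
      (n^((1-α)*p) * n^((α-1)*p)) * a^p + n^((1-α)*p) * ((n-1/5)/r)^(1-p) * B^p := by ring
    rw [e, en] at hc2
    linarith
  have hco := mul_le_mul_of_nonneg_right (coef hr h0 h1 hp m) (Real.rpow_nonneg hA0 p)
  have h4 := mul_le_mul_of_nonneg_left (hc3.trans hco) (show 0 ≤ (α/r)^p by positivity)
  rw [← hS] at h4
  have eS : (α/r)^p * ((r/(α*S))^p * A^p) = (S⁻¹ * A)^p := by
    rw [← Real.mul_rpow (by positivity) hA0, ← Real.mul_rpow (by positivity) (by positivity)]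
    congr 1; field_simp
  rw [← eS]
  linarith

lemma tail_rec (f : ℕ → ℝ≥0∞) (n : ℕ) :
    ∑' k : ℕ, f (n + 1 + k) = f (n + 1) + ∑' k : ℕ, f (n + 1 + 1 + k) := by
  rw [tsum_eq_zero_add' (f := fun k => f (n + 1 + k)) ENNReal.summable]
  congr 1
  apply tsum_congr
  intro k
  congr 1
  ring

theorem stmt_14 (p α : ℝ) (hα0 : 0 < α) (hα1 : α < 1) (hp0 : 0 < p) (hp1 : p ≤ 1 / (α + 2))
    (a : ℕ → ℝ) (ha : ∀ n, 1 ≤ n → 0 ≤ a n) :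
    ENNReal.ofReal ((α * p / (1 - α * p)) ^ p) * ∑' n : ℕ, ENNReal.ofReal (a (n + 1)) ^ p ≤
      ∑' n : ℕ,
        (ENNReal.ofReal ((∑ i ∈ Finset.Icc 1 (n + 1), (i : ℝ) ^ (α - 1))⁻¹) *
          ∑' k : ℕ, ENNReal.ofReal (((n + 1 + k : ℕ) : ℝ) ^ (α - 1) * a (n + 1 + k))) ^ p := by
  obtain ⟨r, hr⟩ : ∃ r, r = 1/p - α := ⟨_, rfl⟩
  have hpr : p * (r + α) = 1 := by rw [hr]; field_simp; ring
  have hr2 : 2 ≤ r := by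
    rw [le_div_iff₀ (by linarith)] at hp1
    have : α + 2 ≤ 1/p := by rw [le_div_iff₀ hp0]; linarith
    linarith
  have hC : α * p / (1 - α * p) = α / r := by
    have : 1 - α * p = r * p := by linarith
    rw [this]; field_simp
  rw [hC]
  set S : ℕ → ℝ := fun n => ∑ i ∈ Finset.Icc 1 (n + 1), (i : ℝ) ^ (α - 1) with hS
  have hSpos : ∀ n, 0 < S n := by
    intro n
    apply Finset.sum_pos
    · intro i hi
      have := (Finset.mem_Icc.mp hi).1
      exact Real.rpow_pos_of_pos (by exact_mod_cast this) _
    · exact ⟨1, by simp⟩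
  set E : ℕ → ℝ≥0∞ := fun n => ∑' k : ℕ, ENNReal.ofReal (((n + 1 + k : ℕ) : ℝ) ^ (α - 1) * a (n + 1 + k)) with hE
  change _ ≤ ∑' n : ℕ, (ENNReal.ofReal ((S n)⁻¹) * E n) ^ p
  have hrec : ∀ n, E n = ENNReal.ofReal (((n:ℝ)+1)^(α-1) * a (n+1)) + E (n+1) := by
    intro n
    have h := tail_rec (fun j : ℕ => ENNReal.ofReal ((j : ℝ) ^ (α - 1) * a j)) n
    have e : ((n:ℝ)+1) = ((n+1 : ℕ) : ℝ) := by push_cast; rfl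
    rw [e]
    exact h
  by_cases htop : E 0 = ∞
  · have h : (ENNReal.ofReal ((S 0)⁻¹) * E 0) ^ p = ∞ := by
      rw [htop, ENNReal.mul_top (by simpa using hSpos 0), ENNReal.top_rpow_of_pos hp0]
    have := ENNReal.le_tsum (f := fun n => (ENNReal.ofReal ((S n)⁻¹) * E n) ^ p) 0
    simp only [h] at this
    rw [top_le_iff.mp this]; exact le_top
  have hfin : ∀ n, E n ≠ ∞ := by
    intro n
    induction n with
    | zero => exact htop
    | succ k ih =>
      intro h
      apply ih
      rw [hrec k, h]; simp
  set A : ℕ → ℝ := fun n => (E n).toReal with hA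
  have hA0 : ∀ n, 0 ≤ A n := fun n => ENNReal.toReal_nonneg
  have hArec : ∀ n, A n = ((n:ℝ)+1)^(α-1) * a (n+1) + A (n+1) := by
    intro n
    simp only [hA]
    rw [hrec n, ENNReal.toReal_add ENNReal.ofReal_ne_top (hfin _), ENNReal.toReal_ofReal]
    exact mul_nonneg (Real.rpow_nonneg (by positivity) _) (ha _ (by omega))
  set T : ℕ → ℝ := fun m => (α/r)^p * ((m:ℝ)^((1-α)*p) * (((m:ℝ) - 1/5)/r)^(1-p)) * (A m)^p with hT
  have hr0 : 0 < r := by linarith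
  have hT0 : T 0 = 0 := by
    simp only [hT, Nat.cast_zero]
    rw [Real.zero_rpow (mul_pos (by linarith) hp0).ne']; simp
  have hTnn : ∀ m, 0 ≤ T m := by
    intro m
    rcases Nat.eq_zero_or_pos m with rfl | hm
    · rw [hT0]
    · have hm1 : (1:ℝ) ≤ m := by exact_mod_cast hm
      have : 0 ≤ ((m:ℝ) - 1/5)/r := div_nonneg (by linarith) hr0.le
      have := hA0 m
      simp only [hT]; positivity
  have hstep : ∀ m, (α/r)^p * (a (m+1))^p + T (m+1) ≤ ((S m)⁻¹ * A m)^p + T m := by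
    intro m
    have := step hr2 hα0 hα1 hpr m (ha (m+1) (by omega)) (hA0 (m+1)) (hArec m)
    simp only [hT, hS]
    push_cast
    exact this
  have hsum : ∀ N, ∑ m ∈ Finset.range N, (α/r)^p * (a (m+1))^p + T N ≤
      ∑ m ∈ Finset.range N, ((S m)⁻¹ * A m)^p := by
    intro N
    induction N with
    | zero => simp [hT0]
    | succ k ih =>
      rw [Finset.sum_range_succ, Finset.sum_range_succ]
      have := hstep k
      linarith
  rw [← ENNReal.tsum_mul_left]
  apply ENNReal.tsum_le_of_sum_range_le
  intro N
  have t1 : ∀ m, ENNReal.ofReal ((α/r)^p) * ENNReal.ofReal (a (m+1))^p = ENNReal.ofReal ((α/r)^p * (a (m+1))^p) := by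
    intro m
    rw [ENNReal.ofReal_rpow_of_nonneg (ha _ (by omega)) hp0.le, ENNReal.ofReal_mul (by positivity)]
  have t2 : ∀ m, (ENNReal.ofReal ((S m)⁻¹) * E m) ^ p = ENNReal.ofReal (((S m)⁻¹ * A m)^p) := by
    intro m
    have hs := hSpos m
    rw [← ENNReal.ofReal_rpow_of_nonneg (mul_nonneg (by positivity) (hA0 m)) hp0.le,
      ENNReal.ofReal_mul (by positivity)]
    simp only [hA]
    rw [ENNReal.ofReal_toReal (hfin m)]
  calc ∑ m ∈ Finset.range N, ENNReal.ofReal ((α/r)^p) * ENNReal.ofReal (a (m+1))^p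
      = ENNReal.ofReal (∑ m ∈ Finset.range N, (α/r)^p * (a (m+1))^p) := by
        rw [ENNReal.ofReal_sum_of_nonneg]
        · exact Finset.sum_congr rfl fun m _ => t1 m
        · intro m _
          have := ha (m+1) (by omega)
          positivity
    _ ≤ ENNReal.ofReal (∑ m ∈ Finset.range N, ((S m)⁻¹ * A m)^p) := by
        apply ENNReal.ofReal_le_ofReal
        have := hsum N
        have := hTnn N
        linarith
    _ = ∑ m ∈ Finset.range N, (ENNReal.ofReal ((S m)⁻¹) * E m) ^ p := by
        rw [ENNReal.ofReal_sum_of_nonneg]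
        · exact Finset.sum_congr rfl fun m _ => (t2 m).symm
        · intro m _
          have := hA0 m
          have := hSpos m
          positivity
    _ ≤ _ := ENNReal.sum_le_tsum _
end

section
/- Let 1 < p < ∞, let (λ_n)_{n≥1} and (Λ_n)_{n≥1} be sequences of positive reals, let a be a real constant such that Λ_n + a·λ_n > 0 for all n ≥ 1, and let 0 < L < p. Define b_n = ((p−L)/p)·(1 + a·λ_n/Λ_n)^{p−1}·(λ_n/Λ_n) + λ_n/λ_{n+1}. If for every integer n ≥ 1 one has ∑_{k=1}^n λ_k·∏_{i=k}^n b_i^{1/(p−1)} ≤ (p/(p−L))·(Λ_n + a·λ_n), then for every nonnegative real sequence (a_n)_{n≥1}, ∑_{n=1}^∞ ( ∑_{k=1}^n (λ_k/Λ_n)·a_k )^p ≤ (p/(p−L))^p · ∑_{n=1}^∞ a_n^p. -/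
open scoped ENNReal

/-- Theorem 5.1: bound on the `l^p` norm of a factorable matrix. -/
theorem stmt_16 (p L a : ℝ) (hp : 1 < p) (hL0 : 0 < L) (hLp : L < p)
    (lam Lam : ℕ → ℝ)
    (hlam : ∀ n, 1 ≤ n → 0 < lam n) (hLam : ∀ n, 1 ≤ n → 0 < Lam n)
    (hpos : ∀ n, 1 ≤ n → 0 < Lam n + a * lam n)
    (b : ℕ → ℝ)
    (hb : ∀ n, 1 ≤ n → b n = (p - L) / p * (1 + a * lam n / Lam n) ^ (p - 1) *
      (lam n / Lam n) + lam n / lam (n + 1))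
    (hmain : ∀ n, 1 ≤ n →
      ∑ k ∈ Finset.Icc 1 n, lam k * ∏ i ∈ Finset.Icc k n, b i ^ (1 / (p - 1)) ≤
        p / (p - L) * (Lam n + a * lam n))
    (A : ℕ → ℝ) (hA : ∀ n, 1 ≤ n → 0 ≤ A n) :
    ∑' n : ℕ, ENNReal.ofReal (∑ k ∈ Finset.Icc 1 (n + 1), lam k / Lam (n + 1) * A k) ^ p ≤
      ENNReal.ofReal ((p / (p - L)) ^ p) * ∑' n : ℕ, ENNReal.ofReal (A (n + 1)) ^ p := by
  have hr0 : 0 < p - 1 := by linarith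
  have hpL : 0 < p - L := by linarith
  have hp0 : 0 < p := by linarith
  set c := p / (p - L) with hc
  have hc0 : 0 < c := by positivity
  have hq : ∀ n, 1 ≤ n → 0 < 1 + a * lam n / Lam n := by
    intro n hn
    have h1 := hLam n hn
    have : 1 + a * lam n / Lam n = (Lam n + a * lam n) / Lam n := by field_simp
    rw [this]
    exact div_pos (hpos n hn) h1
  have hb0 : ∀ n, 1 ≤ n → 0 < b n := by
    intro n hn
    rw [hb n hn]
    have h1 := hLam n hn
    have h2 := hlam n hn
    have h3 := hlam (n+1) (by omega)
    have h4 := hq n hn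
    positivity
  set v : ℕ → ℝ := fun n => ∏ i ∈ Finset.Ico 1 n, b i with hv
  have hv0 : ∀ n, 0 < v n := by
    intro n
    apply Finset.prod_pos
    intro i hi
    exact hb0 i (Finset.mem_Ico.1 hi).1
  have hvs : ∀ n, 1 ≤ n → v (n+1) = v n * b n := by
    intro n hn
    simp only [hv]
    rw [Finset.prod_Ico_succ_top hn]
  have hprod : ∀ k n, 1 ≤ k → k ≤ n → ∏ i ∈ Finset.Icc k n, b i ^ (1 / (p - 1)) =
      v (n+1) ^ (1 / (p-1)) * v k ^ (-(1 / (p-1))) := by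
    intro k n hk hkn
    have h1 : v k * ∏ i ∈ Finset.Icc k n, b i = v (n+1) := by
      simp only [hv]
      rw [← Finset.prod_Ico_consecutive _ hk (show k ≤ n + 1 by omega)]
      rfl
    have h0 : 0 < ∏ i ∈ Finset.Icc k n, b i :=
      Finset.prod_pos fun i hi => hb0 i (hk.trans (Finset.mem_Icc.1 hi).1)
    rw [Real.finsetProd_rpow _ _ (fun i hi => (hb0 i (hk.trans (Finset.mem_Icc.1 hi).1)).le),
      ← h1, Real.mul_rpow (hv0 k).le h0.le, Real.rpow_neg (hv0 k).le]
    have := Real.rpow_pos_of_pos (hv0 k) (1 / (p-1))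
    field_simp
  set T : ℕ → ℝ := fun n => ∑ k ∈ Finset.Icc 1 n, lam k * A k ^ p * v k with hT
  have hT0 : ∀ n, 0 ≤ T n := by
    intro n
    apply Finset.sum_nonneg
    intro k hk
    have h1 := (Finset.mem_Icc.1 hk).1
    have h2 := hlam k h1
    have h3 := hA k h1
    have h4 := hv0 k
    positivity
  have hS0 : ∀ n, 1 ≤ n → 0 ≤ ∑ k ∈ Finset.Icc 1 n, lam k / Lam n * A k := by
    intro n hn
    apply Finset.sum_nonneg
    intro k hk
    have h1 := (Finset.mem_Icc.1 hk).1
    have h2 := hlam k h1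
    have h3 := hA k h1
    have h4 := hLam n hn
    positivity
  have key : ∀ n, 1 ≤ n → (∑ k ∈ Finset.Icc 1 n, lam k / Lam n * A k) ^ p ≤
      c ^ p * (1 / (v n * lam n) - 1 / (v (n+1) * lam (n+1))) * T n := by
    intro n hn
    set W := ∑ k ∈ Finset.Icc 1 n, lam k * v k ^ (-(1/(p-1))) with hW
    have hLn := hLam n hn
    have hln := hlam n hn
    have hln1 := hlam (n+1) (by omega)
    have hqn := hq n hn
    have hvn := hv0 n
    have hvn1 := hv0 (n+1)
    have hW0 : 0 ≤ W := by
      apply Finset.sum_nonneg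
      intro k hk
      have h2 := hlam k (Finset.mem_Icc.1 hk).1
      have h4 := hv0 k
      positivity
    have hol : (∑ k ∈ Finset.Icc 1 n, lam k * A k) ^ p ≤ W ^ (p-1) * T n := by
      set w : ℕ → ℝ := fun k => if 1 ≤ k then lam k * v k ^ (-(1/(p-1))) else 0 with hw
      set f : ℕ → ℝ := fun k => if 1 ≤ k then A k * v k ^ (1/(p-1)) else 0 with hf
      have hw0 : ∀ k, 0 ≤ w k := by
        intro k
        simp only [hw]
        split_ifs with h
        · have h2 := hlam k h
          have h4 := hv0 k
          positivity
        · rfl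
      have hf0 : ∀ k, 0 ≤ f k := by
        intro k
        simp only [hf]
        split_ifs with h
        · have h2 := hA k h
          have h4 := hv0 k
          positivity
        · rfl
      have h := Real.inner_le_weight_mul_Lp_of_nonneg (Finset.Icc 1 n) hp.le w f hw0 hf0
      have e1 : ∑ k ∈ Finset.Icc 1 n, w k * f k = ∑ k ∈ Finset.Icc 1 n, lam k * A k := by
        apply Finset.sum_congr rfl
        intro k hk
        have h1 := (Finset.mem_Icc.1 hk).1
        simp only [hw, hf, h1, if_true]
        rw [Real.rpow_neg (hv0 k).le]
        have := Real.rpow_pos_of_pos (hv0 k) (1 / (p-1))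
        field_simp
      have e2 : ∑ k ∈ Finset.Icc 1 n, w k = W := by
        apply Finset.sum_congr rfl
        intro k hk
        have h1 := (Finset.mem_Icc.1 hk).1
        simp only [hw, h1, if_true]
      have e3 : ∑ k ∈ Finset.Icc 1 n, w k * f k ^ p = T n := by
        apply Finset.sum_congr rfl
        intro k hk
        have h1 := (Finset.mem_Icc.1 hk).1
        simp only [hw, hf, h1, if_true]
        rw [Real.mul_rpow (hA k h1) (Real.rpow_nonneg (hv0 k).le _), ← Real.rpow_mul (hv0 k).le]
        have : v k ^ (-(1/(p-1))) * v k ^ (1/(p-1)*p) = v k := by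
          rw [← Real.rpow_add (hv0 k)]
          have : -(1/(p-1)) + 1/(p-1)*p = 1 := by field_simp; ring
          rw [this, Real.rpow_one]
        calc _ = lam k * A k ^ p * (v k ^ (-(1/(p-1))) * v k ^ (1/(p-1)*p)) := by ring
          _ = _ := by rw [this]
      rw [e1, e2, e3] at h
      have hn0 : 0 ≤ ∑ k ∈ Finset.Icc 1 n, lam k * A k := by
        rw [← e1]
        exact Finset.sum_nonneg fun k _ => mul_nonneg (hw0 k) (hf0 k)
      have h' := Real.rpow_le_rpow hn0 h hp0.le
      rw [Real.mul_rpow (Real.rpow_nonneg hW0 _) (Real.rpow_nonneg (hT0 n) _),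
        ← Real.rpow_mul hW0, ← Real.rpow_mul (hT0 n), inv_mul_cancel₀ hp0.ne', Real.rpow_one] at h'
      have : (1 - p⁻¹) * p = p - 1 := by field_simp
      rwa [this] at h'
    have hWb : v (n+1) ^ (1/(p-1)) * W ≤ c * (Lam n + a * lam n) := by
      refine le_trans (le_of_eq ?_) (hmain n hn)
      rw [hW, Finset.mul_sum]
      apply Finset.sum_congr rfl
      intro k hk
      rw [hprod k n (Finset.mem_Icc.1 hk).1 (Finset.mem_Icc.1 hk).2]
      ring
    have hWb2 : v (n+1) * W ^ (p-1) ≤ c ^ (p-1) * (1 + a * lam n / Lam n) ^ (p-1) * Lam n ^ (p-1) := by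
      have h' := Real.rpow_le_rpow (by positivity) hWb hr0.le
      have e : c * (Lam n + a * lam n) = c * (1 + a * lam n / Lam n) * Lam n := by field_simp
      rw [e, Real.mul_rpow (by positivity) hW0, ← Real.rpow_mul hvn1.le,
        Real.mul_rpow (by positivity) hLn.le, Real.mul_rpow hc0.le hqn.le,
        one_div_mul_cancel hr0.ne', Real.rpow_one] at h'
      exact h'
    have hd : 1 / (v n * lam n) - 1 / (v (n+1) * lam (n+1)) =
        (1 + a * lam n / Lam n) ^ (p-1) / (c * Lam n * v (n+1)) := by
      have hbn := hb0 n hn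
      have e : (p - L) / p = 1 / c := by rw [hc]; field_simp
      have hbe := hb n hn
      rw [e] at hbe
      rw [hvs n hn]
      generalize (1 + a * lam n / Lam n) ^ (p-1) = Q at hbe
      have : Q = (b n - lam n / lam (n+1)) * c * Lam n / lam n := by
        rw [hbe]; field_simp; ring
      rw [this]
      field_simp
    have eS : ∑ k ∈ Finset.Icc 1 n, lam k / Lam n * A k =
        (∑ k ∈ Finset.Icc 1 n, lam k * A k) / Lam n := by
      rw [Finset.sum_div]
      exact Finset.sum_congr rfl fun k _ => by ring
    have hSn : 0 ≤ ∑ k ∈ Finset.Icc 1 n, lam k * A k :=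
      Finset.sum_nonneg fun k hk =>
        mul_nonneg (hlam k (Finset.mem_Icc.1 hk).1).le (hA k (Finset.mem_Icc.1 hk).1)
    rw [eS, Real.div_rpow hSn hLn.le, hd, div_le_iff₀ (by positivity)]
    refine hol.trans ?_
    have ec : c ^ p = c ^ (p-1) * c := by
      rw [← Real.rpow_add_one hc0.ne']; congr 1; ring
    have eL : Lam n ^ p = Lam n ^ (p-1) * Lam n := by
      rw [← Real.rpow_add_one hLn.ne']; congr 1; ring
    have hW3 : W ^ (p-1) ≤ c ^ (p-1) * (1 + a * lam n / Lam n) ^ (p-1) * Lam n ^ (p-1) / v (n+1) := by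
      rw [le_div_iff₀ hvn1]; linarith
    refine (mul_le_mul_of_nonneg_right hW3 (hT0 n)).trans (le_of_eq ?_)
    rw [ec, eL]
    generalize (1 + a * lam n / Lam n) ^ (p-1) = Q
    generalize c ^ (p-1) = C
    generalize Lam n ^ (p-1) = R
    field_simp
  have fin : ∀ N, ∑ n ∈ Finset.range N, (∑ k ∈ Finset.Icc 1 (n+1), lam k / Lam (n+1) * A k) ^ p
      + c ^ p * (1 / (v (N+1) * lam (N+1))) * T N ≤ c ^ p * ∑ n ∈ Finset.range N, A (n+1) ^ p := by
    intro N
    induction N with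
    | zero => simp [hT]
    | succ N ih =>
      rw [Finset.sum_range_succ, Finset.sum_range_succ]
      have hk := key (N+1) (by omega)
      have eT : T (N+1) = T N + lam (N+1) * A (N+1) ^ p * v (N+1) := by
        simp only [hT]
        rw [Finset.sum_Icc_succ_top (by omega)]
      have h1 := hlam (N+1) (by omega)
      have h2 := hv0 (N+1)
      have e : c ^ p * (1 / (v (N+1) * lam (N+1))) * T (N+1) =
          c ^ p * (1 / (v (N+1) * lam (N+1))) * T N + c ^ p * A (N+1) ^ p := by
        rw [eT]; field_simp
      have e2 := mul_sub (c ^ p) (1 / (v (N+1) * lam (N+1))) (1 / (v (N+1+1) * lam (N+1+1)))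
      rw [e2, sub_mul, e] at hk
      linarith
  have hcp : 0 ≤ c ^ p := by positivity
  rw [ENNReal.tsum_eq_iSup_nat]
  refine iSup_le fun N => ?_
  refine le_trans ?_ (mul_le_mul_right (ENNReal.sum_le_tsum (Finset.range N)) _)
  have l1 : ∀ n, ENNReal.ofReal (∑ k ∈ Finset.Icc 1 (n + 1), lam k / Lam (n + 1) * A k) ^ p =
      ENNReal.ofReal ((∑ k ∈ Finset.Icc 1 (n + 1), lam k / Lam (n + 1) * A k) ^ p) := fun n =>
    ENNReal.ofReal_rpow_of_nonneg (hS0 (n+1) (by omega)) hp0.le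
  have l2 : ∀ n, ENNReal.ofReal (A (n+1)) ^ p = ENNReal.ofReal (A (n+1) ^ p) := fun n =>
    ENNReal.ofReal_rpow_of_nonneg (hA (n+1) (by omega)) hp0.le
  simp only [l1, l2]
  rw [← ENNReal.ofReal_sum_of_nonneg (fun n _ => Real.rpow_nonneg (hS0 (n+1) (by omega)) _),
    ← ENNReal.ofReal_sum_of_nonneg (fun n _ => Real.rpow_nonneg (hA (n+1) (by omega)) _),
    ← ENNReal.ofReal_mul hcp]
  apply ENNReal.ofReal_le_ofReal
  have h := fin N
  have h1 := hlam (N+1) (by omega)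
  have h2 := hv0 (N+1)
  have h3 : 0 ≤ c ^ p * (1 / (v (N+1) * lam (N+1))) * T N :=
    mul_nonneg (by positivity) (hT0 N)
  linarith
end

section
/- Let 1 < p < ∞, let (λ_n)_{n≥1} and (Λ_n)_{n≥1} be sequences of positive reals, let a be a real constant such that Λ_n + a·λ_n > 0 for all n ≥ 1, and let 0 < L < p. Suppose that for every n ≥ 1 (with the conventions Λ_0 = λ_0 = 0): ((p−L)/p)·(1 + a·λ_n/Λ_n)^{p−1} + Λ_n/λ_{n+1} ≤ (Λ_n/λ_n)·(1 + a·λ_n/Λ_n)^{p−1}·( (1 − L/p)·λ_n/Λ_n + Λ_{n−1}/Λ_n + a·λ_{n−1}/Λ_n )^{1−p}. Then for every nonnegative real sequence (a_n)_{n≥1}, ∑_{n=1}^∞ ( ∑_{k=1}^n (λ_k/Λ_n)·a_k )^p ≤ (p/(p−L))^p · ∑_{n=1}^∞ a_n^p. -/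
open scoped ENNReal

theorem aux_holder (p u v s t : ℝ) (hp : 1 < p) (hv : 0 < v) (hs : 0 ≤ s) (ht : 0 ≤ t)
    (hu : 0 < u ∨ (u = 0 ∧ s = 0)) :
    (u + v) ^ (1 - p) * (s + t) ^ p ≤ s ^ p * u ^ (1 - p) + t ^ p * v ^ (1 - p) := by
  rcases hu with hu | ⟨hu, hs0⟩
  · have huv : 0 < u + v := by positivity
    have key := (convexOn_rpow hp.le).2
      (Set.mem_Ici.2 (show 0 ≤ s / u by positivity)) (Set.mem_Ici.2 (show 0 ≤ t / v by positivity))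
      (show 0 ≤ u / (u + v) by positivity) (show 0 ≤ v / (u + v) by positivity)
      (by field_simp)
    simp only [smul_eq_mul] at key
    have e : u / (u + v) * (s / u) + v / (u + v) * (t / v) = (s + t) / (u + v) := by
      field_simp
    rw [e, Real.div_rpow (by positivity) huv.le, Real.div_rpow hs hu.le,
      Real.div_rpow ht hv.le] at key
    rw [Real.rpow_sub huv, Real.rpow_sub hu, Real.rpow_sub hv, Real.rpow_one, Real.rpow_one,
      Real.rpow_one]
    have h1 := mul_le_mul_of_nonneg_left key huv.le
    calc _ = (u + v) * ((s + t) ^ p / (u + v) ^ p) := by ring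
      _ ≤ _ := h1
      _ = _ := by field_simp
  · subst hu hs0
    rw [Real.zero_rpow (by linarith : p ≠ 0)]
    simp [mul_comm]

theorem aux_step (p c lm lm' Lm U V S x : ℝ) (hp : 1 < p) (hc : 0 < c) (hlm : 0 < lm)
    (hLm : 0 < Lm) (hV : 0 < V) (hS : 0 ≤ S) (hx : 0 ≤ x)
    (hU : 0 < U ∨ (U = 0 ∧ S = 0)) (hW : 0 < U + c * lm)
    (h : c * (V / Lm) ^ (p - 1) + Lm / lm' ≤
      Lm / lm * (V / Lm) ^ (p - 1) * ((U + c * lm) / Lm) ^ (1 - p)) :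
    c ^ p * ((S + lm * x) / Lm) ^ p + c ^ (p - 1) / lm' * V ^ (1 - p) * (S + lm * x) ^ p ≤
      c ^ (p - 1) / lm * U ^ (1 - p) * S ^ p + x ^ p := by
  have hH := aux_holder p U (c * lm) S (lm * x) hp (by positivity) hS (by positivity) hU
  have hS' : 0 ≤ S + lm * x := by positivity
  have e1 : (lm * x) ^ p * (c * lm) ^ (1 - p) * (c ^ (p - 1) / lm) = x ^ p := by
    rw [Real.mul_rpow hlm.le hx, Real.mul_rpow hc.le hlm.le, Real.rpow_sub hc, Real.rpow_sub hlm,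
      Real.rpow_sub hc, Real.rpow_one, Real.rpow_one]
    field_simp
  have hcoef : c ^ p / Lm ^ p + c ^ (p - 1) / lm' * V ^ (1 - p) ≤
      c ^ (p - 1) / lm * (U + c * lm) ^ (1 - p) := by
    have h2 := mul_le_mul_of_nonneg_left h
      (show 0 ≤ c ^ (p - 1) * V ^ (1 - p) / Lm by positivity)
    have hr : (V / Lm) ^ (p - 1) = (V ^ (1 - p))⁻¹ * Lm / Lm ^ p := by
      rw [Real.div_rpow hV.le hLm.le, ← Real.rpow_neg hV.le, Real.rpow_sub hLm, Real.rpow_one]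
      rw [show -(1 - p) = p - 1 by ring]
      field_simp
    have hr2 : ((U + c * lm) / Lm) ^ (1 - p) = (U + c * lm) ^ (1 - p) * Lm ^ p / Lm := by
      rw [Real.div_rpow hW.le hLm.le, Real.rpow_sub hLm, Real.rpow_one]
      field_simp
    have hcp : c ^ p = c ^ (p - 1) * c := by
      rw [Real.rpow_sub hc, Real.rpow_one]; field_simp
    rw [hr, hr2] at h2
    have hV' : 0 < V ^ (1 - p) := by positivity
    have hL' : 0 < Lm ^ p := by positivity
    calc _ = _ := ?_
      _ ≤ _ := h2
      _ = _ := ?_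
    · rw [hcp]
      generalize V ^ (1 - p) = q at *
      generalize Lm ^ p = r at *
      have e3 : q * q⁻¹ = 1 := mul_inv_cancel₀ hV'.ne'
      have e4 : Lm * Lm⁻¹ = 1 := mul_inv_cancel₀ hLm.ne'
      simp only [div_eq_mul_inv]
      linear_combination (-(c ^ (p-1) * c * r⁻¹ * Lm * Lm⁻¹)) * e3 +
        (-(c ^ (p-1) * c * r⁻¹) - c ^ (p-1) * lm'⁻¹ * q) * e4
    · generalize (U + c * lm) ^ (1 - p) = w at *
      field_simp
  rw [Real.div_rpow hS' hLm.le]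
  calc _ = (c ^ p / Lm ^ p + c ^ (p - 1) / lm' * V ^ (1 - p)) * (S + lm * x) ^ p := by ring
    _ ≤ (c ^ (p - 1) / lm * (U + c * lm) ^ (1 - p)) * (S + lm * x) ^ p := by gcongr
    _ = (c ^ (p - 1) / lm) * ((U + c * lm) ^ (1 - p) * (S + lm * x) ^ p) := by ring
    _ ≤ (c ^ (p - 1) / lm) * (S ^ p * U ^ (1 - p) + (lm * x) ^ p * (c * lm) ^ (1 - p)) := by
        gcongr
    _ = c ^ (p - 1) / lm * U ^ (1 - p) * S ^ p +
        (lm * x) ^ p * (c * lm) ^ (1 - p) * (c ^ (p - 1) / lm) := by ring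
    _ = _ := by rw [e1]

/-- Corollary 5.1: bound on the `l^p` norm of a factorable matrix. -/
theorem stmt_17 (p L a : ℝ) (hp : 1 < p) (hL0 : 0 < L) (hLp : L < p)
    (lam Lam : ℕ → ℝ)
    (hlam : ∀ n, 1 ≤ n → 0 < lam n) (hLam : ∀ n, 1 ≤ n → 0 < Lam n)
    (hlam0 : lam 0 = 0) (hLam0 : Lam 0 = 0)
    (hpos : ∀ n, 1 ≤ n → 0 < Lam n + a * lam n)
    (hbasepos : ∀ n, 1 ≤ n →
      0 < (1 - L / p) * lam n / Lam n + Lam (n - 1) / Lam n + a * lam (n - 1) / Lam n)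
    (hmain : ∀ n, 1 ≤ n →
      (p - L) / p * (1 + a * lam n / Lam n) ^ (p - 1) + Lam n / lam (n + 1) ≤
        Lam n / lam n * (1 + a * lam n / Lam n) ^ (p - 1) *
          ((1 - L / p) * lam n / Lam n + Lam (n - 1) / Lam n + a * lam (n - 1) / Lam n)
            ^ (1 - p))
    (A : ℕ → ℝ) (hA : ∀ n, 1 ≤ n → 0 ≤ A n) :
    ∑' n : ℕ, ENNReal.ofReal (∑ k ∈ Finset.Icc 1 (n + 1), lam k / Lam (n + 1) * A k) ^ p ≤
      ENNReal.ofReal ((p / (p - L)) ^ p) * ∑' n : ℕ, ENNReal.ofReal (A (n + 1)) ^ p := by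
  have hp0 : 0 < p := by linarith
  have hc : 0 < 1 - L / p := by
    rw [sub_pos, div_lt_one hp0]; exact hLp
  obtain ⟨c, hcdef⟩ : ∃ c, c = 1 - L / p := ⟨_, rfl⟩
  have hc2 : (p - L) / p = c := by rw [hcdef]; field_simp
  have hc3 : p / (p - L) = c⁻¹ := by rw [← hc2, inv_div]
  rw [← hcdef] at hc
  rw [hc3]
  simp only [hc2, ← hcdef] at hmain hbasepos
  set S : ℕ → ℝ := fun n => ∑ k ∈ Finset.Icc 1 n, lam k * A k with hSdef
  have hS0 : S 0 = 0 := by simp [hSdef]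
  have hSs : ∀ n, S (n + 1) = S n + lam (n + 1) * A (n + 1) := fun n => by
    simp only [hSdef]
    rw [Finset.sum_Icc_succ_top (by omega)]
  have hSn : ∀ n, 0 ≤ S n := fun n => Finset.sum_nonneg fun k hk => by
    have hk1 := (Finset.mem_Icc.1 hk).1
    exact mul_nonneg (hlam k hk1).le (hA k hk1)
  have hx : ∀ n, ∑ k ∈ Finset.Icc 1 (n + 1), lam k / Lam (n + 1) * A k
      = S (n + 1) / Lam (n + 1) := fun n => by
    simp only [hSdef, Finset.sum_div]
    exact Finset.sum_congr rfl fun k _ => by ring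
  have hind : ∀ N, c ^ p * ∑ n ∈ Finset.range N, (S (n + 1) / Lam (n + 1)) ^ p
      + c ^ (p - 1) / lam (N + 1) * (Lam N + a * lam N) ^ (1 - p) * S N ^ p
      ≤ ∑ n ∈ Finset.range N, A (n + 1) ^ p := by
    intro N
    induction N with
    | zero => simp [hS0, Real.zero_rpow hp0.ne']
    | succ n ih =>
      rw [Finset.sum_range_succ, Finset.sum_range_succ]
      have hL1 := hLam (n + 1) (by omega)
      have hm := hmain (n + 1) (by omega)
      have hb := hbasepos (n + 1) (by omega)
      simp only [Nat.add_sub_cancel] at hm hb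
      have e1 : 1 + a * lam (n + 1) / Lam (n + 1)
          = (Lam (n + 1) + a * lam (n + 1)) / Lam (n + 1) := by field_simp
      have e2 : c * lam (n + 1) / Lam (n + 1) + Lam n / Lam (n + 1) + a * lam n / Lam (n + 1)
          = (Lam n + a * lam n + c * lam (n + 1)) / Lam (n + 1) := by ring
      rw [e1, e2] at hm
      rw [e2] at hb
      have hst := aux_step p c (lam (n + 1)) (lam (n + 1 + 1)) (Lam (n + 1))
        (Lam n + a * lam n) (Lam (n + 1) + a * lam (n + 1)) (S n) (A (n + 1)) hp hc
        (hlam _ (by omega)) hL1 (hpos _ (by omega)) (hSn n) (hA _ (by omega))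
        (by
          rcases Nat.eq_zero_or_pos n with h0 | h0
          · right; subst h0; simp [hS0, hlam0, hLam0]
          · left; exact hpos n h0)
        ((div_pos_iff_of_pos_right hL1).1 hb) hm
      rw [← hSs] at hst
      linarith
  have hxn : ∀ n, 0 ≤ S (n + 1) / Lam (n + 1) := fun n =>
    div_nonneg (hSn _) (hLam _ (by omega)).le
  have hfin : ∀ N, ∑ n ∈ Finset.range N, (S (n + 1) / Lam (n + 1)) ^ p
      ≤ c⁻¹ ^ p * ∑ n ∈ Finset.range N, A (n + 1) ^ p := by
    intro N
    have hD : 0 ≤ c ^ (p - 1) / lam (N + 1) * (Lam N + a * lam N) ^ (1 - p) * S N ^ p := by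
      have := hlam (N + 1) (by omega)
      have h3 : 0 ≤ Lam N + a * lam N := by
        rcases Nat.eq_zero_or_pos N with h0 | h0
        · subst h0; simp [hlam0, hLam0]
        · exact (hpos N h0).le
      have := hSn N
      positivity
    have h4 := hind N
    rw [Real.inv_rpow hc.le, ← div_eq_inv_mul, le_div_iff₀ (by positivity)]
    linarith
  simp only [hx]
  refine ENNReal.tsum_le_of_sum_range_le fun N => ?_
  calc ∑ n ∈ Finset.range N, ENNReal.ofReal (S (n + 1) / Lam (n + 1)) ^ p
      = ENNReal.ofReal (∑ n ∈ Finset.range N, (S (n + 1) / Lam (n + 1)) ^ p) := by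
        rw [ENNReal.ofReal_sum_of_nonneg fun n _ => Real.rpow_nonneg (hxn n) p]
        exact Finset.sum_congr rfl fun n _ => ENNReal.ofReal_rpow_of_nonneg (hxn n) hp0.le
    _ ≤ ENNReal.ofReal (c⁻¹ ^ p * ∑ n ∈ Finset.range N, A (n + 1) ^ p) :=
        ENNReal.ofReal_le_ofReal (hfin N)
    _ = ENNReal.ofReal (c⁻¹ ^ p) * ∑ n ∈ Finset.range N, ENNReal.ofReal (A (n + 1)) ^ p := by
        rw [ENNReal.ofReal_mul (by positivity),
          ENNReal.ofReal_sum_of_nonneg fun n _ => Real.rpow_nonneg (hA (n + 1) (by omega)) p]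
        congr 1
        exact Finset.sum_congr rfl fun n _ =>
          (ENNReal.ofReal_rpow_of_nonneg (hA (n + 1) (by omega)) hp0.le).symm
    _ ≤ _ := by
        gcongr
        exact ENNReal.sum_le_tsum _
end
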